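/- For every integer n, there is an automorphism of the free group F on x and y mapping x^{2n+1} y x^{−n} y x^{−n} y to x^{3n+1} y^3; consequently the one-relator group ⟨x, y | x^{2n+1} y x^{−n} y x^{−n} y⟩ (the quotient of F by the normal closure of x^{2n+1} y x^{−n} y x^{−n} y) is isomorphic to G_{3, 3n+1}. (This says the slope-3 embedding of the twist knot K_n is (3, 3n+1) Seifert-fibered with respect to the outside handlebody.) -/

import Mathlib

/-- The free group on two generators; `xx` and `yy` are the generators. -/
def xx : FreeGroup (Fin 2) := FreeGroup.of 0
def yy : FreeGroup (Fin 2) := FreeGroup.of 1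

/-- The word `w_{p,q,r,m}` represented by the twisted torus knot
`T(p,q) + r T(m,n)` in the inside handlebody: writing `r = r̄ + α p`
with `0 ≤ r̄ < p`, it is `∏_{j=0}^{p-1} x^{m e_j} y` where `e_j = α+1`
if `(j q mod p) < r̄` and `e_j = α` otherwise. -/
def w (p q r : ℕ) (m : ℤ) : FreeGroup (Fin 2) :=
  ((List.range p).map (fun j =>
    xx ^ (m * ((if j * q % p < r % p then r / p + 1 else r / p : ℕ) : ℤ)) * yy)).prod

/-- An element of the free group of rank two is primitive iff some automorphism
carries the generator `xx` to it. -/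
def IsPrimitive (g : FreeGroup (Fin 2)) : Prop :=
  ∃ φ : FreeGroup (Fin 2) ≃* FreeGroup (Fin 2), φ xx = g

/-- The one-relator group `G_{a,b} = ⟨x, y | x^a y^b⟩`. -/
abbrev Gg (a b : ℤ) : Type := PresentedGroup ({xx ^ a * yy ^ b} : Set (FreeGroup (Fin 2)))

/-- `g` is `(a,b)` Seifert-fibered if `F / ⟪g⟫ ≅ G_{a,b}`. -/
def IsSF (g : FreeGroup (Fin 2)) (a b : ℤ) : Prop :=
  Nonempty (PresentedGroup ({g} : Set (FreeGroup (Fin 2))) ≃* Gg a b)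

/-! The relator is `x ^ (3n+1) * (x ^ (-n) * y) ^ 3`, and `x`, `x ^ (-n) * y` is again a basis of
the free group: the automorphism fixing `x` and sending `y` to `x ^ n * y` carries it to `x`, `y`,
hence carries the relator to `x ^ (3n+1) * y ^ 3`. An isomorphism of free groups induces one of the
quotients by corresponding relators, and `G_{a,b} ≅ G_{b,a}` because exchanging the generators turns
`x ^ a * y ^ b` into a conjugate of `x ^ b * y ^ a`. -/

/-- The isomorphism of presented groups induced by an isomorphism of free groups carrying one set
of relators onto the other. -/
def presentedGroupCongr {α β : Type*} (e : FreeGroup α ≃* FreeGroup β) {R : Set (FreeGroup α)}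
    {S : Set (FreeGroup β)} (h : e '' R = S) : PresentedGroup R ≃* PresentedGroup S :=
  QuotientGroup.congr _ _ e <|
    (Subgroup.map_normalClosure R e.toMonoidHom e.surjective).trans
      (congrArg Subgroup.normalClosure h)

section Transvection

variable {α : Type*} [DecidableEq α] {a b : α}

/-- The Nielsen transvection of a free group: the automorphism sending the generator `b` to
`a ^ n * b` and fixing all the others. -/
def transvection (hab : a ≠ b) (n : ℤ) : FreeGroup α ≃* FreeGroup α :=
  let f (k : ℤ) := FreeGroup.lift (Function.update .of b (.of a ^ k * .of b))
  have f_neg_comp_f (k : ℤ) : (f (-k)).comp (f k) = MonoidHom.id (FreeGroup α) := by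
    ext c
    obtain rfl | hcb := eq_or_ne c b
    · simp [f, hab]
    · simp [f, hcb]
  MonoidHom.toMulEquiv (f n) (f (-n)) (f_neg_comp_f n) (by simpa using f_neg_comp_f (-n))

lemma transvection_of_self (hab : a ≠ b) (n : ℤ) :
    transvection hab n (.of b) = .of a ^ n * .of b := by
  simp [transvection]

lemma transvection_of_of_ne (hab : a ≠ b) (n : ℤ) {c : α} (hcb : c ≠ b) :
    transvection hab n (.of c) = .of c := by
  simp [transvection, hcb]

lemma transvection_zpow_mul_zpow (hab : a ≠ b) (n k l : ℤ) :
    transvection hab n (.of a ^ k * (.of a ^ (-n) * .of b) ^ l) = .of a ^ k * .of b ^ l := by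
  simp only [map_mul, map_zpow, transvection_of_self, transvection_of_of_ne hab n hab, zpow_neg,
    map_inv, inv_mul_cancel_left]

end Transvection

lemma zpow_mul_mul_zpow_neg_mul_zpow_neg_mul {G : Type*} [Group G] (g h : G) (k n : ℤ) :
    g ^ k * h * g ^ (-n) * h * g ^ (-n) * h = g ^ (k + n) * (g ^ (-n) * h) ^ (3 : ℤ) := by
  rw [zpow_ofNat, pow_three, zpow_add]
  group

lemma transvection_relator (n : ℤ) :
    transvection zero_ne_one n (xx ^ (2 * n + 1) * yy * xx ^ (-n) * yy * xx ^ (-n) * yy) =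
      xx ^ (3 * n + 1) * yy ^ (3 : ℤ) := by
  rw [zpow_mul_mul_zpow_neg_mul_zpow_neg_mul, show 2 * n + 1 + n = 3 * n + 1 by ring]
  exact transvection_zpow_mul_zpow zero_ne_one n (3 * n + 1) 3

lemma conj_swap_zpow_mul_zpow (a b : ℤ) :
    MulAut.conj (xx ^ b) (FreeGroup.freeGroupCongr (Equiv.swap 0 1) (xx ^ a * yy ^ b)) =
      xx ^ b * yy ^ a := by
  have swap_relator :
      FreeGroup.freeGroupCongr (Equiv.swap 0 1) (xx ^ a * yy ^ b) = yy ^ a * xx ^ b := by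
    simp [xx, yy]
  rw [swap_relator, MulAut.conj_apply, ← mul_assoc, mul_inv_cancel_right]

/-- The isomorphism `G_{a,b} ≅ G_{b,a}` exchanging the generators, up to an inner automorphism. -/
def Gg.comm (a b : ℤ) : Gg a b ≃* Gg b a :=
  presentedGroupCongr
    ((FreeGroup.freeGroupCongr (Equiv.swap 0 1)).trans (MulAut.conj (xx ^ b))) <|
    Set.image_singleton.trans (congrArg _ (conj_swap_zpow_mul_zpow a b))

lemma isSF_zpow_mul_zpow (a b : ℤ) : IsSF (xx ^ a * yy ^ b) a b :=
  ⟨MulEquiv.refl _⟩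

lemma IsSF.symm {g : FreeGroup (Fin 2)} {a b : ℤ} (hg : IsSF g a b) : IsSF g b a :=
  hg.map fun e => e.trans (Gg.comm a b)

lemma IsSF.of_map {g : FreeGroup (Fin 2)} {a b : ℤ} (φ : FreeGroup (Fin 2) ≃* FreeGroup (Fin 2))
    (hg : IsSF (φ g) a b) : IsSF g a b :=
  hg.map (presentedGroupCongr φ Set.image_singleton).trans

/-- For every integer `n`, some automorphism of the free group maps
`x^{2n+1} y x^{-n} y x^{-n} y` to `x^{3n+1} y^3`; consequently
`⟨x, y | x^{2n+1} y x^{-n} y x^{-n} y⟩ ≅ G_{3, 3n+1}` (the slope-3 embedding of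
the twist knot `K_n` is `(3, 3n+1)` Seifert-fibered w.r.t. the outside
handlebody). -/
theorem stmt14 (n : ℤ) :
    (∃ φ : FreeGroup (Fin 2) ≃* FreeGroup (Fin 2),
      φ (xx ^ (2 * n + 1) * yy * xx ^ (-n) * yy * xx ^ (-n) * yy) =
        xx ^ (3 * n + 1) * yy ^ (3 : ℤ)) ∧
    IsSF (xx ^ (2 * n + 1) * yy * xx ^ (-n) * yy * xx ^ (-n) * yy) 3 (3 * n + 1) := by
  refine ⟨⟨transvection zero_ne_one n, transvection_relator n⟩, IsSF.symm ?_⟩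
  apply IsSF.of_map (transvection zero_ne_one n)
  rw [transvection_relator]
  exact isSF_zpow_mul_zpow (3 * n + 1) 3
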